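/- Assume the setting of the sub-QMF construction: λ ≥ 2, n ≥ 1, N ≤ λ^n, trigonometric polynomials p_l (with p_l(0) = 1 for l ≤ N, and |p_l|² ≡ 1 for N < l ≤ λ^n) and g_l^{(r)} with 1 − |p_l(ξ)|² = λ^n Σ_{r=1}^{r_l} |g_l^{(r)}(ξ)|², an enumeration ν_1, …, ν_{λ^n} of Λ, τ(ξ) = λ^{−n} Σ_{l=1}^{λ^n} p_l(λξ) e^{i ν_l·ξ}, q_{1,l}^{(r)}(ξ) = τ(ξ)·conj(g_l^{(r)}(λξ)), and q_{2,m}(ξ) = λ^{−n/2}(e^{i ν_m·ξ} − τ(ξ)·conj(p_m(λξ))). Suppose τ has accuracy number a ≥ 1 and flatness number b ≥ 1. Then for each 1 ≤ l ≤ N and 1 ≤ r ≤ r_l, the wavelet mask q_{1,l}^{(r)} has exactly as many vanishing moments as g_l^{(r)}, and each wavelet mask q_{2,m}, 1 ≤ m ≤ λ^n, has at least min{a, b} vanishing moments. -/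

import Mathlib

open MeasureTheory Finset Filter Topology

noncomputable section

/-- `f` is a trigonometric polynomial on ℝⁿ: a finite sum ξ ↦ Σ_{k∈F} h(k) e^{−i k·ξ}. -/
def IsTrigPoly (n : ℕ) (f : (Fin n → ℝ) → ℂ) : Prop :=
  ∃ (F : Finset (Fin n → ℤ)) (h : (Fin n → ℤ) → ℂ),
    ∀ ξ : Fin n → ℝ,
      f ξ = ∑ k ∈ F, h k * Complex.exp (-Complex.I * ∑ i, (k i : ℂ) * (ξ i : ℂ))

/-- Λ = {0,…,λ−1}ⁿ as a finite subset of ℤⁿ. -/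
def Lambda (lam n : ℕ) : Finset (Fin n → ℤ) :=
  Fintype.piFinset fun _ => Finset.Ico (0 : ℤ) (lam : ℤ)

/-- The translate ξ + (2π/λ)·ρ, i.e. ξ + γ for γ = (2π/λ)ρ ∈ Γ. -/
def gshift (lam n : ℕ) (ξ : Fin n → ℝ) (ρ : Fin n → ℤ) : Fin n → ℝ :=
  fun i => ξ i + (2 * Real.pi / lam) * (ρ i : ℝ)

/-- e^{i ν·ξ}. -/
def eI (n : ℕ) (ν : Fin n → ℤ) (ξ : Fin n → ℝ) : ℂ :=
  Complex.exp (Complex.I * ∑ i, (ν i : ℂ) * (ξ i : ℂ))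

/-- The dilate λ·ξ. -/
def dil (lam n : ℕ) (ξ : Fin n → ℝ) : Fin n → ℝ := fun i => (lam : ℝ) * ξ i
/-- The order of the zero of κ at ξ₀: the smallest m such that some m-th order
derivative of κ is nonzero at ξ₀ (junk value 0 if no such m exists). -/
def zeroOrder (n : ℕ) (κ : (Fin n → ℝ) → ℂ) (ξ₀ : Fin n → ℝ) : ℕ :=
  sInf {m : ℕ | iteratedFDeriv ℝ m κ ξ₀ ≠ 0}

/-- The number of vanishing moments of κ: the order of its zero at 0. -/
def vanishingMoments (n : ℕ) (κ : (Fin n → ℝ) → ℂ) : ℕ := zeroOrder n κ 0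

/-- The flatness number of κ: the order of the zero of κ − 1 at 0. -/
def flatnessNumber (n : ℕ) (κ : (Fin n → ℝ) → ℂ) : ℕ :=
  zeroOrder n (fun ξ => κ ξ - 1) 0

/-- The accuracy number of κ: the minimum order of the zeros of κ over Γ∖{0}. -/
def accuracyNumber (lam n : ℕ) (κ : (Fin n → ℝ) → ℂ) : ℕ :=
  sInf {m : ℕ | ∃ ρ ∈ Lambda lam n, ρ ≠ 0 ∧
    iteratedFDeriv ℝ m κ (gshift lam n 0 ρ) ≠ 0}
open scoped ContDiff in
/-- real analytic, with all derivatives of order below `m` vanishing at 0 -/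
def VZ (n m : ℕ) (f : (Fin n → ℝ) → ℂ) : Prop :=
  ContDiff ℝ ω f ∧ ∀ k < m, iteratedFDeriv ℝ k f 0 = 0

lemma VZ.mono {n m m' : ℕ} {f : (Fin n → ℝ) → ℂ} (h : VZ n m f) (hm : m' ≤ m) : VZ n m' f :=
  ⟨h.1, fun k hk => h.2 k (by omega)⟩

lemma VZ.add {n m : ℕ} {f g : (Fin n → ℝ) → ℂ} (hf : VZ n m f) (hg : VZ n m g) :
    VZ n m (fun x => f x + g x) := by
  refine ⟨hf.1.add hg.1, fun k hk => ?_⟩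
  have := iteratedFDeriv_add_apply (x := 0) (i := k) (hf.1.of_le le_top).contDiffAt
    (hg.1.of_le le_top).contDiffAt
  rw [hf.2 k hk, hg.2 k hk, add_zero] at this
  exact this

lemma VZ.mul {n a b : ℕ} {f g : (Fin n → ℝ) → ℂ} (hf : VZ n a f) (hg : VZ n b g) :
    VZ n (a + b) (fun x => f x * g x) := by
  refine ⟨hf.1.mul hg.1, fun k hk => ?_⟩
  have := norm_iteratedFDeriv_mul_le hf.1 hg.1 0 (n := k) le_top
  rw [← norm_le_zero_iff]
  refine this.trans (le_of_eq (Finset.sum_eq_zero fun i hi => ?_))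
  by_cases h : i < a
  · simp [hf.2 i h]
  · rw [Finset.mem_range] at hi
    rw [hg.2 (k - i) (by omega)]; simp

lemma VZ.of_contDiff {n : ℕ} {f : (Fin n → ℝ) → ℂ} (h : ContDiff ℝ (⊤ : WithTop ℕ∞) f) : VZ n 0 f :=
  ⟨h, fun k hk => by omega⟩

lemma VZ.mul_left {n a : ℕ} {f g : (Fin n → ℝ) → ℂ} (hf : ContDiff ℝ (⊤ : WithTop ℕ∞) f) (hg : VZ n a g) :
    VZ n a (fun x => f x * g x) := by
  simpa using (VZ.of_contDiff hf).mul hg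

lemma VZ.zero {n m : ℕ} : VZ n m (fun _ => 0) := by
  refine ⟨contDiff_const, fun k hk => ?_⟩
  have := iteratedFDeriv_fun_zero (𝕜 := ℝ) (E := Fin n → ℝ) (F := ℂ) (n := k)
  exact congrFun this 0

lemma VZ.sum {n m : ℕ} {ι : Type*} (s : Finset ι) {f : ι → (Fin n → ℝ) → ℂ}
    (hf : ∀ i ∈ s, VZ n m (f i)) :
    VZ n m (fun x => ∑ i ∈ s, f i x) := by
  classical
  induction s using Finset.induction_on with
  | empty => simpa using VZ.zero
  | insert i s hi ih =>
    simp only [Finset.sum_insert hi]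
    exact (hf i (by simp)).add (ih fun j hj => hf j (by simp [hj]))

lemma VZ.conj {n m : ℕ} {f : (Fin n → ℝ) → ℂ} (hf : VZ n m f) :
    VZ n m (fun x => (starRingEnd ℂ) (f x)) := by
  refine ⟨Complex.conjCLE.contDiff.comp hf.1, fun k hk => ?_⟩
  have := Complex.conjLIE.norm_iteratedFDeriv_comp_left (𝕜 := ℝ) f 0 k
  rw [hf.2 k hk, norm_zero, norm_eq_zero] at this
  exact this

lemma VZ.conj_iff {n m : ℕ} {f : (Fin n → ℝ) → ℂ} :
    VZ n m (fun x => (starRingEnd ℂ) (f x)) ↔ VZ n m f :=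
  ⟨fun h => by simpa using h.conj, fun h => h.conj⟩

lemma VZ.smul {n m : ℕ} {f : (Fin n → ℝ) → ℂ} (hf : VZ n m f) (c : ℝ) :
    VZ n m (fun x => f (fun i => c * x i)) := by
  have e : (fun x : Fin n → ℝ => f (fun i => c * x i)) =
      f ∘ (c • ContinuousLinearMap.id ℝ (Fin n → ℝ)) := by
    ext x; rfl
  rw [e]
  refine ⟨hf.1.comp (ContinuousLinearMap.contDiff _), fun k hk => ?_⟩
  rw [ContinuousLinearMap.iteratedFDeriv_comp_right _ hf.1 _ le_top]
  rw [map_zero, hf.2 k hk]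
  ext; simp

lemma VZ.dil_iff {n m lam : ℕ} (hl : 2 ≤ lam) {f : (Fin n → ℝ) → ℂ} :
    VZ n m (fun x => f (dil lam n x)) ↔ VZ n m f := by
  refine ⟨fun h => ?_, fun h => h.smul lam⟩
  have := h.smul (lam : ℝ)⁻¹
  have e : (lam : ℝ) ≠ 0 := by positivity
  have e2 : ∀ x : Fin n → ℝ, dil lam n (fun i => (lam : ℝ)⁻¹ * x i) = x := by
    intro x; ext i; simp [dil, e]
  simpa only [e2] using this

lemma VZ.of_mul {n : ℕ} {t f : (Fin n → ℝ) → ℂ} (ht : VZ n 1 (fun x => t x - 1))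
    (hf : ContDiff ℝ (⊤ : WithTop ℕ∞) f) (m : ℕ) (h : VZ n m (fun x => t x * f x)) : VZ n m f := by
  induction m with
  | zero => exact VZ.of_contDiff hf
  | succ m ih =>
    have h1 := (ht.mul (ih (h.mono (by omega)))).mul_left (f := fun _ => -1) contDiff_const
    rw [add_comm 1 m] at h1
    have h2 := h.add h1
    convert h2 using 2
    ring

lemma zo_congr {n : ℕ} {f g : (Fin n → ℝ) → ℂ} (hf : ContDiff ℝ (⊤ : WithTop ℕ∞) f)
    (hg : ContDiff ℝ (⊤ : WithTop ℕ∞) g) (h : ∀ m, VZ n m f ↔ VZ n m g) :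
    vanishingMoments n f = vanishingMoments n g := by
  have key : ∀ f g : (Fin n → ℝ) → ℂ, ContDiff ℝ (⊤ : WithTop ℕ∞) f → 
      ContDiff ℝ (⊤ : WithTop ℕ∞) g → (∀ m, VZ n m f ↔ VZ n m g) → 
      (∃ k, iteratedFDeriv ℝ k f 0 ≠ 0) → ∃ k ≤ vanishingMoments n f, iteratedFDeriv ℝ k g 0 ≠ 0 := by
    intro f g hf hg h hk
    by_contra! hc
    have : VZ n (vanishingMoments n f + 1) g := ⟨hg, fun k hk => hc k (by omega)⟩
    rw [← h] at this
    exact Nat.sInf_mem (s := {m : ℕ | iteratedFDeriv ℝ m f 0 ≠ 0}) hk (this.2 _ (Nat.lt_succ_self _))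
  by_cases h1 : ∃ k, iteratedFDeriv ℝ k f 0 ≠ 0
  · obtain ⟨k, hk, hk'⟩ := key f g hf hg h h1
    obtain ⟨j, hj, hj'⟩ := key g f hg hf (fun m => (h m).symm) ⟨k, hk'⟩
    apply le_antisymm
    · exact (Nat.sInf_le hj').trans hj
    · exact (Nat.sInf_le hk').trans hk
  · have h2 : ¬ ∃ k, iteratedFDeriv ℝ k g 0 ≠ 0 := by
      intro h2
      obtain ⟨j, hj, hj'⟩ := key g f hg hf (fun m => (h m).symm) h2
      exact h1 ⟨j, hj'⟩
    push Not at h1 h2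
    simp [vanishingMoments, zeroOrder, h1, h2]

lemma exists_ifd_ne {n : ℕ} {f : (Fin n → ℝ) → ℂ} (hf : ContDiff ℝ (⊤ : WithTop ℕ∞) f)
    (x : Fin n → ℝ) (hx : f x ≠ 0) : ∃ k, iteratedFDeriv ℝ k f 0 ≠ 0 := by
  by_contra! hc
  apply hx
  have ha : AnalyticOnNhd ℝ f Set.univ := contDiff_omega_iff_analyticOnNhd.1 hf
  obtain ⟨p, r, hp⟩ := ha 0 (Set.mem_univ _)
  refine congrFun (ha.eq_of_eventuallyEq (g := fun _ => 0) (z₀ := 0) analyticOnNhd_const ?_) x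
  filter_upwards [Metric.eball_mem_nhds (0 : Fin n → ℝ) hp.r_pos] with y hy
  have := hp.hasSum_iteratedFDeriv hy
  simp only [hc, zero_add] at this
  exact this.unique (by simpa using hasSum_zero)

lemma le_vm {n m : ℕ} {f : (Fin n → ℝ) → ℂ} (hf : VZ n m f)
    (x : Fin n → ℝ) (hx : f x ≠ 0) : m ≤ vanishingMoments n f := by
  have h := Nat.sInf_mem (s := {m : ℕ | iteratedFDeriv ℝ m f 0 ≠ 0}) (exists_ifd_ne hf.1 x hx)
  by_contra! hc
  exact h (hf.2 _ hc)

lemma contDiff_eI (n : ℕ) (k : Fin n → ℤ) : ContDiff ℝ (⊤ : WithTop ℕ∞) (eI n k) := by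
  unfold eI
  refine ContDiff.cexp (contDiff_const.mul (ContDiff.sum fun i _ => contDiff_const.mul ?_))
  exact Complex.ofRealCLM.contDiff.comp (contDiff_apply ℝ ℝ i)

lemma IsTrigPoly.eq {n : ℕ} {f : (Fin n → ℝ) → ℂ} (hf : IsTrigPoly n f) :
    ∃ (F : Finset (Fin n → ℤ)) (h : (Fin n → ℤ) → ℂ), ∀ ξ, f ξ = ∑ k ∈ F, h k * eI n (-k) ξ := by
  obtain ⟨F, h, e⟩ := hf
  refine ⟨F, h, fun ξ => ?_⟩
  simp [e, eI]

lemma IsTrigPoly.contDiff {n : ℕ} {f : (Fin n → ℝ) → ℂ} (hf : IsTrigPoly n f) :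
    ContDiff ℝ (⊤ : WithTop ℕ∞) f := by
  obtain ⟨F, h, e⟩ := hf.eq
  rw [funext e]
  exact ContDiff.sum fun k _ => contDiff_const.mul (contDiff_eI n _)

lemma eI_add (n : ℕ) (k : Fin n → ℤ) (x y : Fin n → ℝ) : eI n k (x + y) = eI n k x * eI n k y := by
  simp [eI, ← Complex.exp_add, ← mul_add, ← Finset.sum_add_distrib]

lemma eI_add' (n : ℕ) (k l : Fin n → ℤ) (x : Fin n → ℝ) :
    eI n (k + l) x = eI n k x * eI n l x := by
  simp [eI, ← Complex.exp_add, ← mul_add, ← add_mul, ← Finset.sum_add_distrib]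

lemma eI_zero (n : ℕ) (x : Fin n → ℝ) : eI n 0 x = 1 := by simp [eI]

lemma eI_conj (n : ℕ) (k : Fin n → ℤ) (x : Fin n → ℝ) :
    (starRingEnd ℂ) (eI n k x) = eI n (-k) x := by
  simp [eI, ← Complex.exp_conj]

lemma eI_ne (n : ℕ) (k : Fin n → ℤ) (x : Fin n → ℝ) : eI n k x ≠ 0 := Complex.exp_ne_zero _

lemma eI_per (n : ℕ) (k ρ : Fin n → ℤ) : eI n k (fun i => 2 * Real.pi * ρ i) = 1 := by
  rw [eI, Complex.exp_eq_one_iff]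
  refine ⟨∑ i, k i * ρ i, ?_⟩
  push_cast
  rw [Finset.mul_sum, Finset.sum_mul]
  exact Finset.sum_congr rfl fun i _ => by ring

lemma gshift_eq (lam n : ℕ) (ξ : Fin n → ℝ) (ρ : Fin n → ℤ) :
    gshift lam n ξ ρ = ξ + gshift lam n 0 ρ := by
  ext i; simp [gshift]

lemma dil_gshift (lam n : ℕ) (hl : 2 ≤ lam) (ξ : Fin n → ℝ) (ρ : Fin n → ℤ) :
    dil lam n (gshift lam n ξ ρ) = dil lam n ξ + fun i => 2 * Real.pi * ρ i := by
  have e : (lam : ℝ) ≠ 0 := by positivity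
  ext i; simp [gshift, dil]; field_simp

lemma IsTrigPoly.per {n lam : ℕ} (hl : 2 ≤ lam) {f : (Fin n → ℝ) → ℂ} (hf : IsTrigPoly n f)
    (ξ : Fin n → ℝ) (ρ : Fin n → ℤ) : f (dil lam n (gshift lam n ξ ρ)) = f (dil lam n ξ) := by
  obtain ⟨F, h, e⟩ := hf.eq
  simp [e, dil_gshift lam n hl, eI_add, eI_per]

lemma sum1 (lam : ℕ) (hl : 2 ≤ lam) (k : ℤ) (hk : k ≠ 0) (hk1 : |k| < lam) :
    ∑ j ∈ Finset.Ico (0 : ℤ) lam,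
      Complex.exp (Complex.I * (k * (((2 * Real.pi / lam) * (j : ℝ) : ℝ) : ℂ))) = 0 := by
  have hlc : (lam : ℂ) ≠ 0 := by norm_cast; omega
  set z := Complex.exp (Complex.I * (k * (2 * Real.pi / lam))) with hz
  have h1 : z ≠ 1 := by
    intro h
    rw [hz, Complex.exp_eq_one_iff] at h
    obtain ⟨m, hm⟩ := h
    have hpi : (Real.pi : ℂ) ≠ 0 := by exact_mod_cast Real.pi_ne_zero
    have hI := Complex.I_ne_zero
    have : (k : ℂ) = m * lam := by
      field_simp at hm
      rw [hm]; ring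
    have h' : k = m * lam := by exact_mod_cast this
    have : (lam : ℤ) ∣ k := ⟨m, by rw [h']; ring⟩
    exact hk (Int.eq_zero_of_abs_lt_dvd this hk1)
  have h2 : z ^ lam = 1 := by
    rw [hz, ← Complex.exp_nat_mul, Complex.exp_eq_one_iff]
    refine ⟨k, ?_⟩
    field_simp
  have h3 : ∑ j ∈ Finset.range lam, z ^ j = 0 := by
    have := geom_sum_mul z lam
    rw [h2, sub_self] at this
    exact (mul_eq_zero.1 this).resolve_right (sub_ne_zero.2 h1)
  rw [← h3]
  symm
  refine Finset.sum_nbij (fun j => (j : ℤ)) ?_ ?_ ?_ ?_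
  · intro j hj; simp at hj ⊢; exact hj
  · intro a _ b _ h; simpa using h
  · intro j hj
    simp only [Finset.coe_Ico, Set.mem_Ico] at hj
    exact ⟨j.toNat, by simp; omega, by simp; omega⟩
  · intro j _
    rw [hz, ← Complex.exp_nat_mul]
    congr 1
    push_cast
    ring

lemma sumL (lam n : ℕ) (hl : 2 ≤ lam) (k : Fin n → ℤ) (hk : k ≠ 0) (hk1 : ∀ i, |k i| < lam) :
    ∑ ρ ∈ Lambda lam n, eI n k (gshift lam n 0 ρ) = 0 := by
  obtain ⟨i, hi⟩ := Function.ne_iff.1 hk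
  have := Finset.prod_univ_sum (fun _ : Fin n => Finset.Ico (0 : ℤ) lam) (fun i (j : ℤ) =>
    Complex.exp (Complex.I * (k i * (((2 * Real.pi / lam) * (j : ℝ) : ℝ) : ℂ))))
  rw [Finset.prod_eq_zero (Finset.mem_univ i) (sum1 lam hl (k i) hi (hk1 i))] at this
  rw [this]
  refine Finset.sum_congr rfl fun ρ _ => ?_
  rw [← Complex.exp_sum, eI, Finset.mul_sum]
  simp [gshift]

lemma sum0 (lam n : ℕ) :
    ∑ ρ ∈ Lambda lam n, eI n 0 (gshift lam n 0 ρ) = (lam : ℂ) ^ n := by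
  simp [eI_zero, Lambda]

lemma polyphase (lam n : ℕ) (hlam : 2 ≤ lam)
    (p : Fin (lam ^ n) → (Fin n → ℝ) → ℂ)
    (hp : ∀ l, IsTrigPoly n (p l))
    (ν : Fin (lam ^ n) → Fin n → ℤ)
    (hν_inj : Function.Injective ν) (hν_mem : ∀ l, ν l ∈ Lambda lam n)
    (τ : (Fin n → ℝ) → ℂ)
    (hτ : ∀ ξ, τ ξ = ((lam : ℂ) ^ n)⁻¹ * ∑ l, p l (dil lam n ξ) * eI n (ν l) ξ)
    (m : Fin (lam ^ n)) (ξ : Fin n → ℝ) :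
    ∑ ρ ∈ Lambda lam n, τ (gshift lam n ξ ρ) * eI n (-ν m) (gshift lam n ξ ρ) =
      p m (dil lam n ξ) := by
  have hlc : (lam : ℂ) ^ n ≠ 0 := by
    apply pow_ne_zero; norm_cast; omega
  have e : ∀ ρ, τ (gshift lam n ξ ρ) * eI n (-ν m) (gshift lam n ξ ρ) =
      ∑ l, ((lam : ℂ) ^ n)⁻¹ * (p l (dil lam n ξ) * eI n (ν l - ν m) ξ) *
        eI n (ν l - ν m) (gshift lam n 0 ρ) := by
    intro ρ
    rw [hτ, Finset.mul_sum, Finset.sum_mul]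
    refine Finset.sum_congr rfl fun l _ => ?_
    rw [(hp l).per hlam, mul_assoc, mul_assoc, ← eI_add', ← sub_eq_add_neg, gshift_eq, eI_add]
    ring
  rw [Finset.sum_congr rfl fun ρ _ => e ρ, Finset.sum_comm]
  simp only [← Finset.mul_sum]
  rw [Finset.sum_eq_single m]
  · rw [sub_self, sum0, eI_zero]; field_simp
  · intro l _ hlm
    rw [sumL lam n hlam _ (sub_ne_zero.2 fun h => hlm (hν_inj h)), mul_zero]
    intro i
    have h1 := hν_mem l
    have h2 := hν_mem m
    simp only [Lambda, Fintype.mem_piFinset, Finset.mem_Ico] at h1 h2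
    have := h1 i
    have := h2 i
    simp only [Pi.sub_apply]
    rw [abs_lt]; omega
  · simp

/-- vanishing moments in the sub-QMF shared-responsibility construction:
each q_{1,l}^{(r)} has exactly as many vanishing moments as g_l^{(r)}, and each q_{2,m}
has at least min{a,b} vanishing moments, where a is the accuracy number and b the
flatness number of τ. -/
theorem vanishing_moments_subQMF (lam n N : ℕ) (hlam : 2 ≤ lam) (hn : 1 ≤ n)
    (hN : N ≤ lam ^ n)
    (p : Fin (lam ^ n) → (Fin n → ℝ) → ℂ)
    (R : Fin (lam ^ n) → ℕ)
    (g : (l : Fin (lam ^ n)) → Fin (R l) → (Fin n → ℝ) → ℂ)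
    (hp : ∀ l, IsTrigPoly n (p l))
    (hg : ∀ l (r : Fin (R l)), IsTrigPoly n (g l r))
    (hpg : ∀ l : Fin (lam ^ n), (l : ℕ) < N →
      ∀ ξ, 1 - ‖p l ξ‖ ^ 2 = (lam : ℝ) ^ n * ∑ r, ‖g l r ξ‖ ^ 2)
    (hp0 : ∀ l : Fin (lam ^ n), (l : ℕ) < N → p l 0 = 1)
    (hp1 : ∀ l : Fin (lam ^ n), N ≤ (l : ℕ) → ∀ ξ, ‖p l ξ‖ ^ 2 = 1)
    (ν : Fin (lam ^ n) → Fin n → ℤ)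
    (hν_inj : Function.Injective ν) (hν_mem : ∀ l, ν l ∈ Lambda lam n)
    (hν_surj : ∀ ρ ∈ Lambda lam n, ∃ l, ν l = ρ)
    (τ : (Fin n → ℝ) → ℂ)
    (hτ : ∀ ξ, τ ξ = ((lam : ℂ) ^ n)⁻¹ * ∑ l, p l (dil lam n ξ) * eI n (ν l) ξ)
    (q1 : (l : Fin (lam ^ n)) → Fin (R l) → (Fin n → ℝ) → ℂ)
    (hq1 : ∀ l (r : Fin (R l)) ξ,
      q1 l r ξ = τ ξ * (starRingEnd ℂ) (g l r (dil lam n ξ)))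
    (q2 : Fin (lam ^ n) → (Fin n → ℝ) → ℂ)
    (hq2 : ∀ m ξ, q2 m ξ = ((Real.sqrt ((lam : ℝ) ^ n))⁻¹ : ℂ) *
      (eI n (ν m) ξ - τ ξ * (starRingEnd ℂ) (p m (dil lam n ξ))))
    (a b : ℕ) (ha : accuracyNumber lam n τ = a) (ha1 : 1 ≤ a)
    (hb : flatnessNumber n τ = b) (hb1 : 1 ≤ b) :
    (∀ l : Fin (lam ^ n), (l : ℕ) < N → ∀ r : Fin (R l),
      vanishingMoments n (q1 l r) = vanishingMoments n (g l r)) ∧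
    (∀ m : Fin (lam ^ n), min a b ≤ vanishingMoments n (q2 m)) := by
  have hdil : ∀ f : (Fin n → ℝ) → ℂ, ContDiff ℝ (⊤ : WithTop ℕ∞) f →
      ContDiff ℝ (⊤ : WithTop ℕ∞) (fun ξ => f (dil lam n ξ)) := fun f hf =>
    ((VZ.dil_iff (m := 0) hlam).2 (VZ.of_contDiff hf)).1
  have hconj : ∀ f : (Fin n → ℝ) → ℂ, ContDiff ℝ (⊤ : WithTop ℕ∞) f →
      ContDiff ℝ (⊤ : WithTop ℕ∞) (fun ξ => (starRingEnd ℂ) (f ξ)) := fun f hf =>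
    (VZ.of_contDiff hf).conj.1
  have hτc : ContDiff ℝ (⊤ : WithTop ℕ∞) τ := by
    rw [funext hτ]
    exact contDiff_const.mul (ContDiff.sum fun l _ =>
      (hdil _ (hp l).contDiff).mul (contDiff_eI n _))
  have hτb : VZ n b (fun ξ => τ ξ - 1) := by
    refine ⟨hτc.sub contDiff_const, fun k hk => ?_⟩
    rw [← hb] at hk
    simpa using Nat.notMem_of_lt_sInf hk
  have hτa : ∀ ρ ∈ Lambda lam n, ρ ≠ 0 → VZ n a (fun ξ => τ (gshift lam n ξ ρ)) := by
    intro ρ hρ h0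
    have e : (fun ξ => τ (gshift lam n ξ ρ)) = fun ξ => τ (ξ + gshift lam n 0 ρ) := by
      ext ξ; rw [gshift_eq]
    rw [e]
    refine ⟨hτc.comp (contDiff_id.add contDiff_const), fun k hk => ?_⟩
    rw [iteratedFDeriv_comp_add_right, zero_add]
    rw [← ha] at hk
    by_contra hc
    exact Nat.notMem_of_lt_sInf hk ⟨ρ, hρ, h0, hc⟩
  constructor
  · intro l _ r
    have hgc := (hg l r).contDiff
    have hgd := hconj _ (hdil _ hgc)
    rw [funext (hq1 l r)]
    refine zo_congr (hτc.mul hgd) hgc fun m => ?_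
    have e : VZ n m (fun ξ => (starRingEnd ℂ) (g l r (dil lam n ξ))) ↔ VZ n m (g l r) :=
      VZ.conj_iff.trans (VZ.dil_iff hlam)
    rw [← e]
    exact ⟨fun h => VZ.of_mul (hτb.mono hb1) hgd m h, fun h => h.mul_left hτc⟩
  · intro m
    have h0 : (0 : Fin n → ℤ) ∈ Lambda lam n := by
      simp [Lambda]; omega
    have hP : VZ n (min a b) (fun ξ => p m (dil lam n ξ) + -1 * eI n (-ν m) ξ) := by
      have h1 := ((hτb.mono (min_le_right a b)).mul_left (contDiff_eI n (-ν m))).add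
        (VZ.sum ((Lambda lam n).erase 0) (f := fun ρ ξ =>
          eI n (-ν m) (gshift lam n ξ ρ) * τ (gshift lam n ξ ρ)) fun ρ hρ =>
          ((hτa ρ (Finset.mem_of_mem_erase hρ) (Finset.ne_of_mem_erase hρ)).mono
            (min_le_left a b)).mul_left ?_)
      · convert h1 using 2 with ξ
        rw [← polyphase lam n hlam p hp ν hν_inj hν_mem τ hτ m ξ, ← Finset.add_sum_erase _ _ h0]
        have : gshift lam n ξ 0 = ξ := by ext i; simp [gshift]
        rw [this, Finset.sum_congr rfl fun ρ _ => mul_comm _ _]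
        ring
      · have e : (fun ξ => eI n (-ν m) (gshift lam n ξ ρ)) =
            fun ξ => eI n (-ν m) (ξ + gshift lam n 0 ρ) := by
          ext ξ; rw [gshift_eq]
        rw [e]
        exact (contDiff_eI n _).comp (contDiff_id.add contDiff_const)
    have hQ : VZ n (min a b) (q2 m) := by
      have h1 := ((((hτb.mono (min_le_right a b)).mul_left (contDiff_eI n (ν m))).add
        (hP.conj.mul_left hτc))).mul_left (f := fun _ => -((Real.sqrt ((lam : ℝ) ^ n))⁻¹ : ℂ))
        contDiff_const
      convert h1 using 2 with ξ
      rw [hq2]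
      simp only [map_add, map_mul, eI_conj, neg_neg, map_neg, map_one]
      ring
    let ρ : Fin n → ℤ := fun _ => 1
    have hρ : ρ ∈ Lambda lam n := by simp [Lambda, ρ]; omega
    have hρ0 : ρ ≠ 0 := fun h => by
      have := congrFun h ⟨0, hn⟩
      simp [ρ] at this
    have hz : τ (gshift lam n 0 ρ) = 0 := by
      have := (hτa ρ hρ hρ0).2 0 ha1
      rw [← norm_eq_zero, norm_iteratedFDeriv_zero, norm_eq_zero] at this
      exact this
    refine le_vm hQ (gshift lam n 0 ρ) ?_
    rw [hq2, hz, zero_mul, sub_zero]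
    refine mul_ne_zero ?_ (eI_ne _ _ _)
    have : Real.sqrt ((lam : ℝ) ^ n) ≠ 0 := by positivity
    exact inv_ne_zero (by exact_mod_cast this)
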